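/- Let 1 ≤ p < ∞, let b ≤ d and b' ≤ d' be real numbers, and set η := max(|b − b'|, |d − d'|). If η ≤ 1, then the L^p distance between the indicator functions of the triangles T(b,d) and T(b',d') with respect to the Lebesgue measure on ℝ² satisfies (∫_{ℝ²} |1_{T(b,d)} − 1_{T(b',d')}|^p dω)^{1/p} ≤ (2(d − b + 1))^{1/p} · η^{1/p}. -/

import Mathlib

open MeasureTheory

/-- The triangular region `T(b,d) = {(x,y) : b ≤ x ≤ y ≤ d}` in the plane. -/
def Tri (b d : ℝ) : Set (ℝ × ℝ) := {q | b ≤ q.1 ∧ q.1 ≤ q.2 ∧ q.2 ≤ d}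

theorem Tri_meas (b d : ℝ) : MeasurableSet (Tri b d) := by
  have : IsClosed (Tri b d) := by
    refine IsClosed.and (isClosed_le (by fun_prop) (by fun_prop)) (IsClosed.and (isClosed_le (by fun_prop) (by fun_prop)) (isClosed_le (by fun_prop) (by fun_prop)))
  exact this.measurableSet

theorem Tri_vol (b d : ℝ) (h : b ≤ d) :
    volume (Tri b d) = ENNReal.ofReal ((d - b) ^ 2 / 2) := by
  rw [Measure.volume_eq_prod, Measure.prod_apply (Tri_meas b d)]
  have h1 : ∀ x : ℝ, volume (Prod.mk x ⁻¹' Tri b d)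
      = (Set.Icc b d).indicator (fun x => ENNReal.ofReal (d - x)) x := by
    intro x
    by_cases hx : x ∈ Set.Icc b d
    · rw [Set.indicator_of_mem hx, ← Real.volume_Icc]
      congr 1
      ext y
      simp only [Tri, Set.mem_preimage, Set.mem_setOf_eq, Set.mem_Icc]
      exact ⟨fun h => h.2, fun h => ⟨hx.1, h⟩⟩
    · rw [Set.indicator_of_notMem hx]
      have : Prod.mk x ⁻¹' Tri b d = ∅ := by
        ext y
        simp only [Tri, Set.mem_preimage, Set.mem_setOf_eq, Set.mem_empty_iff_false, iff_false]
        rintro ⟨h1, h2, h3⟩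
        exact hx ⟨h1, h2.trans h3⟩
      rw [this, measure_empty]
  simp_rw [h1]
  rw [lintegral_indicator measurableSet_Icc, ← ofReal_integral_eq_lintegral_ofReal]
  · rw [integral_Icc_eq_integral_Ioc, ← intervalIntegral.integral_of_le h]
    congr 1
    rw [intervalIntegral.integral_sub (by simp) (by simp)]
    simp
    ring
  · exact (Continuous.integrableOn_Icc (by fun_prop))
  · filter_upwards [ae_restrict_mem measurableSet_Icc] with x hx
    simpa using hx.2

theorem Tri_inter (b d b' d' : ℝ) : Tri b d ∩ Tri b' d' = Tri (max b b') (min d d') := by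
  ext q
  simp only [Tri, Set.mem_inter_iff, Set.mem_setOf_eq, max_le_iff, le_min_iff]
  tauto

theorem Tri_real (b d : ℝ) (h : b ≤ d) : volume.real (Tri b d) = (d - b) ^ 2 / 2 := by
  rw [Measure.real, Tri_vol b d h, ENNReal.toReal_ofReal (by positivity)]

theorem Tri_fin (b d : ℝ) (h : b ≤ d) : volume (Tri b d) ≠ ⊤ := by
  rw [Tri_vol b d h]; exact ENNReal.ofReal_ne_top

theorem Tri_symm (b d b' d' : ℝ) (h : b ≤ d) (h' : b' ≤ d')
    (hη : max |b - b'| |d - d'| ≤ 1) :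
    volume ((Tri b d \ Tri b' d') ∪ (Tri b' d' \ Tri b d)) ≤
      ENNReal.ofReal ((2 * (d - b + 1)) * max |b - b'| |d - d'|) := by
  have f1 := Tri_fin b d h
  have f2 := Tri_fin b' d' h'
  have e1 := measureReal_inter_add_diff (μ := volume) (s := Tri b d) (Tri_meas b' d') f1
  have e2 := measureReal_inter_add_diff (μ := volume) (s := Tri b' d') (Tri_meas b d) f2
  have g1 : volume (Tri b d \ Tri b' d') ≠ ⊤ := measure_ne_top_of_subset Set.diff_subset f1
  have g2 : volume (Tri b' d' \ Tri b d) ≠ ⊤ := measure_ne_top_of_subset Set.diff_subset f2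
  refine (measure_union_le _ _).trans ?_
  rw [← ENNReal.ofReal_toReal g1, ← ENNReal.ofReal_toReal g2,
    ← ENNReal.ofReal_add ENNReal.toReal_nonneg ENNReal.toReal_nonneg]
  apply ENNReal.ofReal_le_ofReal
  change volume.real _ + volume.real _ ≤ _
  rw [Set.inter_comm, Tri_inter, Tri_real _ _ h] at e1
  rw [Tri_inter, Tri_real _ _ h'] at e2
  obtain ⟨η, hmax⟩ : ∃ η, η = max |b - b'| |d - d'| := ⟨_, rfl⟩
  rw [← hmax] at hη ⊢
  have a1 : |b - b'| ≤ η := hmax ▸ le_max_left _ _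
  have a2 : |d - d'| ≤ η := hmax ▸ le_max_right _ _
  rw [abs_le] at a1 a2
  obtain ⟨a1, a3⟩ := a1
  obtain ⟨a2, a4⟩ := a2
  have hη0 : 0 ≤ η := by linarith
  generalize volume.real (Tri b d \ Tri b' d') = X at *
  generalize volume.real (Tri b' d' \ Tri b d) = Y at *
  by_cases hc : max b' b ≤ min d' d
  · rw [Tri_real _ _ hc] at e2
    rw [Tri_real _ _ hc] at e1
    obtain ⟨L, hL⟩ : ∃ L, L = d - b := ⟨_, rfl⟩
    obtain ⟨u, hu⟩ : ∃ u, u = b - b' := ⟨_, rfl⟩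
    obtain ⟨v, hv⟩ : ∃ v, v = d' - d := ⟨_, rfl⟩
    have hb : b' = b - u := by linarith
    have hd : d' = b + L + v := by linarith
    have hd0 : d = b + L := by linarith
    subst hb hd hd0
    have q0 : 0 ≤ L := by linarith
    have q1 : u ≤ η := by linarith
    have q2 : -η ≤ u := by linarith
    have q3 : v ≤ η := by linarith
    have q4 : -η ≤ v := by linarith
    have q5 : η^2 ≤ η := by nlinarith
    have m1 := mul_nonneg q0 (sub_nonneg.2 q1)
    have m2 := mul_nonneg q0 (sub_nonneg.2 q2)
    have m3 := mul_nonneg q0 (sub_nonneg.2 q3)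
    have m4 := mul_nonneg q0 (sub_nonneg.2 q4)
    have s1 : u^2 ≤ η^2 := by nlinarith
    have s2 : v^2 ≤ η^2 := by nlinarith
    have s3 := sq_nonneg (u-v)
    have s4 := sq_nonneg (u+v)
    rcases le_total u 0 with hu0 | hu0 <;> rcases le_total v 0 with hv0 | hv0
    · rw [max_eq_left (by linarith), min_eq_left (by linarith)] at e1 e2
      nlinarith
    · rw [max_eq_left (by linarith), min_eq_right (by linarith)] at e1 e2
      nlinarith
    · rw [max_eq_right (by linarith), min_eq_left (by linarith)] at e1 e2
      nlinarith
    · rw [max_eq_right (by linarith), min_eq_right (by linarith)] at e1 e2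
      nlinarith
  · have hn : 0 ≤ volume.real (Tri (max b' b) (min d' d)) := measureReal_nonneg
    have key : d - b ≤ η ∧ d' - b' ≤ η := by
      rw [max_le_iff, le_min_iff, le_min_iff] at hc
      by_cases c1 : b' ≤ d
      · have c2 : ¬ b ≤ d' := fun c => hc ⟨⟨h', c1⟩, c, h⟩
        constructor <;> linarith
      · constructor <;> linarith
    rw [max_comm, min_comm] at e2
    rw [max_comm, min_comm] at e1
    rw [max_comm, min_comm] at hn
    have k1 : (d-b)^2 ≤ η := by nlinarith [key.1]
    have k2 : (d'-b')^2 ≤ η := by nlinarith [key.2]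
    nlinarith [mul_nonneg (sub_nonneg.2 h) hη0]

/-- Per-bar estimate: for `1 ≤ p < ∞` and `η = max(|b − b'|, |d − d'|) ≤ 1`, the
`L^p` distance between the indicator functions of `T(b,d)` and `T(b',d')` is at
most `(2(d − b + 1))^{1/p} · η^{1/p}`. -/
theorem stmt_9 (p : ℝ) (hp : 1 ≤ p) (b d b' d' : ℝ) (h : b ≤ d) (h' : b' ≤ d')
    (hη : max |b - b'| |d - d'| ≤ 1) :
    (∫⁻ x, ENNReal.ofReal
        (|(Tri b d).indicator (fun _ => (1 : ℝ)) x
          - (Tri b' d').indicator (fun _ => (1 : ℝ)) x| ^ p)) ^ (1 / p)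
      ≤ ENNReal.ofReal
          ((2 * (d - b + 1)) ^ (1 / p) * (max |b - b'| |d - d'|) ^ (1 / p)) := by
  have hp0 : p ≠ 0 := by linarith
  have hm : 0 ≤ max |b - b'| |d - d'| := le_max_of_le_left (abs_nonneg _)
  have hi : ∀ x, ENNReal.ofReal (|(Tri b d).indicator (fun _ => (1 : ℝ)) x
          - (Tri b' d').indicator (fun _ => (1 : ℝ)) x| ^ p)
      = ((Tri b d \ Tri b' d') ∪ (Tri b' d' \ Tri b d)).indicator 1 x := by
    intro x
    by_cases h1 : x ∈ Tri b d <;> by_cases h2 : x ∈ Tri b' d' <;>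
      simp [Set.indicator, h1, h2, hp0]
  simp_rw [hi]
  rw [lintegral_indicator_one (((Tri_meas b d).diff (Tri_meas b' d')).union
    ((Tri_meas b' d').diff (Tri_meas b d))), ← Real.mul_rpow (by linarith) hm,
    ← ENNReal.ofReal_rpow_of_nonneg (mul_nonneg (by linarith) hm) (by positivity)]
  exact ENNReal.rpow_le_rpow (Tri_symm b d b' d' h h' hη) (by positivity)
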